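/- Let A and B be FDDS, let α be the number of unroll trees of 𝒰(B), and let n ≥ 2α + depth(B). If 𝒰(A)|_n = 𝒰(B)|_n then depth(A) = depth(B). -/

import Mathlib

noncomputable section

/-- A rooted tree (finite or infinite), presented by its levels: `level n` is the
set of vertices of depth `n` (finitely many at each depth), every vertex of depth
`n+1` has a parent of depth `n` (edges are directed towards the root), and there
is a unique vertex of depth `0`, the root. -/
structure RTree : Type 1 where
  level : ℕ → Type
  parent : ∀ n, level (n + 1) → level n
  fin : ∀ n, Fintype (level n)
  root : level 0
  root_unique : ∀ x : level 0, x = root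

namespace RTree

/-- Isomorphism of rooted trees: a depth-preserving bijection of the vertices
commuting with the parent maps (hence root- and edge-preserving). -/
def Iso (t s : RTree) : Prop :=
  ∃ e : ∀ n, t.level n ≃ s.level n,
    ∀ (n : ℕ) (x : t.level (n + 1)), e n (t.parent n x) = s.parent n (e (n + 1) x)

/-- The (layer-by-layer direct) product of two rooted trees. -/
def tprod (t s : RTree) : RTree where
  level n := t.level n × s.level n
  parent n x := (t.parent n x.1, s.parent n x.2)
  fin n := by haveI := t.fin n; haveI := s.fin n; infer_instance
  root := (t.root, s.root)
  root_unique x := by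
    obtain ⟨a, b⟩ := x
    rw [t.root_unique a, s.root_unique b]

/-- The cut of a tree at depth `n`: the subtree induced on vertices of depth `≤ n`. -/
def tcut (t : RTree) (n : ℕ) : RTree where
  level k := PLift (k ≤ n) × t.level k
  parent k x := (⟨Nat.le_of_succ_le x.1.down⟩, t.parent k x.2)
  fin k := by
    haveI := t.fin k
    haveI : Finite (PLift (k ≤ n)) := Finite.of_subsingleton
    exact Fintype.ofFinite _
  root := (⟨Nat.zero_le n⟩, t.root)
  root_unique x := by
    obtain ⟨a, b⟩ := x
    rw [t.root_unique b]

/-- A tree is finite when it has no vertices below some depth. -/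
def IsFinite (t : RTree) : Prop := ∃ N, ∀ k, N ≤ k → IsEmpty (t.level k)

/-- The depth of a (finite) tree: the largest depth of one of its vertices. -/
def depth (t : RTree) : ℕ := sSup {n | Nonempty (t.level n)}

/-- `tpow t k` is the `k`-fold product `t^k` of the tree `t` with itself (for `k ≥ 1`). -/
def tpow (t : RTree) : ℕ → RTree
  | 0 => t
  | 1 => t
  | n + 2 => tprod t (tpow t (n + 1))

/-- Iterated parent map, sending a vertex of depth `k+1` to its ancestor of depth 1. -/
def down (t : RTree) : ∀ k, t.level (k + 1) → t.level 1
  | 0, x => x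
  | k + 1, x => t.down k (t.parent (k + 1) x)

/-- The subtree of `t` rooted at the depth-1 vertex `v` (a child of the root). -/
def subtreeAt (t : RTree) (v : t.level 1) : RTree where
  level k := { x : t.level (k + 1) // t.down k x = v }
  parent k x := ⟨t.parent (k + 1) x.1, x.2⟩
  fin k := by haveI := t.fin (k + 1); exact Fintype.ofFinite _
  root := ⟨v, rfl⟩
  root_unique x := Subtype.ext x.2

/-- `D t`: the forest (here, a list) of the subtrees of `t` rooted at the
children of the root. -/
def D (t : RTree) : List RTree := (@Finset.univ _ (t.fin 1)).toList.map t.subtreeAt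

end RTree

/-- A forest is a finite multiset of rooted trees; we represent it by a list of
(concrete) trees, equality of forests being `ForestEq` below. -/
abbrev Forest := List RTree

/-- Equality of forests as multisets of isomorphism classes of rooted trees. -/
def ForestEq (F G : Forest) : Prop := Multiset.Rel RTree.Iso (↑F) (↑G)

/-- `F` is a sub-multiset of `G` up to isomorphism of rooted trees. -/
def ForestLe (F G : Forest) : Prop :=
  ∃ H : Multiset RTree, H ≤ (↑G : Multiset RTree) ∧ Multiset.Rel RTree.Iso (↑F) H

/-- The product of two forests: the multiset of pairwise products. -/
def fprod (F G : Forest) : Forest := (F.map fun t => G.map fun s => t.tprod s).flatten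

/-- The cut of a forest at depth `n`. -/
def fcut (F : Forest) (n : ℕ) : Forest := F.map (RTree.tcut · n)

/-- The depth of a forest: maximum of the depths of its trees. -/
def fdepth (F : Forest) : ℕ := (F.map RTree.depth).foldr max 0

/-- `fpow F k` is the `k`-fold product `F^k` of the forest `F` with itself (for `k ≥ 1`). -/
def fpow (F : Forest) : ℕ → Forest
  | 0 => F
  | 1 => F
  | n + 2 => fprod F (fpow F (n + 1))

/-- `D` of a forest: the multiset union of the `D` of its trees. -/
def fD (F : Forest) : Forest := (F.map RTree.D).flatten

/-- `R F`: the rooted tree obtained by attaching each tree of the forest `F`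
as a child subtree of a new common root, so that `D (R F) = F`. -/
def rollRoot (F : Forest) : RTree where
  level k :=
    match k with
    | 0 => PUnit
    | k + 1 => Σ i : Fin F.length, (F.get i).level k
  parent k :=
    match k with
    | 0 => fun _ => PUnit.unit
    | k + 1 => fun x => ⟨x.1, (F.get x.1).parent k x.2⟩
  fin k := by
    match k with
    | 0 => exact inferInstanceAs (Fintype PUnit)
    | k + 1 =>
      haveI : ∀ i : Fin F.length, Fintype ((F.get i).level k) := fun i => (F.get i).fin k
      exact inferInstanceAs (Fintype (Σ i : Fin F.length, (F.get i).level k))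
  root := PUnit.unit
  root_unique _ := rfl

/-- The number of vertices of depth `d` in a forest. -/
def levelCard (F : Forest) (d : ℕ) : ℕ := (F.map fun t => @Fintype.card _ (t.fin d)).sum

/-- The total number of vertices of a (finite) forest. -/
def totalCard (F : Forest) : ℕ := ∑ d ∈ Finset.range (fdepth F + 1), levelCard F d

/-- A finite discrete-time dynamical system: a finite set of states together
with a transition function. -/
structure FDDS : Type 1 where
  S : Type
  fin : Fintype S
  f : S → S

namespace FDDS

/-- A state is periodic when some positive iterate of the transition function fixes it. -/
def Periodic (A : FDDS) (u : A.S) : Prop := ∃ p, 1 ≤ p ∧ A.f^[p] u = u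

/-- The least `k` such that `f^[k] s` is periodic. -/
def depthOf (A : FDDS) (s : A.S) : ℕ := sInf {k | A.Periodic (A.f^[k] s)}

/-- The depth of an FDDS: the maximum over states `s` of the least `k` such
that `f^[k] s` is periodic. -/
def depth (A : FDDS) : ℕ := sSup {d | ∃ s : A.S, d = A.depthOf s}

/-- The functional digraph of `A` has a single (weakly) connected component. -/
def Connected (A : FDDS) : Prop := ∀ s s' : A.S, ∃ k l, A.f^[k] s = A.f^[l] s'

/-- The unroll tree of `A` in the state `u`: vertices of depth `k` are the
`k`-th preimages of `u`, the parent of `(v,k+1)` being `(f v, k)`. -/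
def unrollTree (A : FDDS) (u : A.S) : RTree where
  level k := { s : A.S // A.f^[k] s = u }
  parent k x := ⟨A.f x.1, by rw [← Function.iterate_succ_apply]; exact x.2⟩
  fin k := by haveI := A.fin; exact Fintype.ofFinite _
  root := ⟨u, rfl⟩
  root_unique x := Subtype.ext x.2

/-- The unroll of `A`: the multiset of the unroll trees of `A` in its periodic states. -/
def unroll (A : FDDS) : Forest :=
  haveI := A.fin
  letI : DecidablePred A.Periodic := Classical.decPred _
  (Finset.univ.filter A.Periodic).toList.map A.unrollTree

/-- The minimal period of a periodic state. -/
def minPeriod (A : FDDS) (u : A.S) : ℕ := sInf {p | 1 ≤ p ∧ A.f^[p] u = u}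

/-- The periodic state `w` with `f^[i] w = u`: the `i`-th "shift" of `u`
backwards along its cycle. -/
def shiftState (A : FDDS) (u : A.S) (i : ℕ) : A.S := A.f^[i * (A.minPeriod u - 1)] u

/-- The shift `σ^i(t)` of the unroll tree `t = unrollTree A u`: the unroll tree
rooted at the depth-`i` vertex of the infinite branch of `t`. -/
def shiftTree (A : FDDS) (u : A.S) (i : ℕ) : RTree := A.unrollTree (A.shiftState u i)

/-- The unroll tree of `A` in `u` admits a periodic pattern of size `p ≥ 1`,
i.e. `σ^p(t_u) = t_u`. -/
def PatternSize (A : FDDS) (u : A.S) (p : ℕ) : Prop :=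
  1 ≤ p ∧ RTree.Iso (A.shiftTree u p) (A.unrollTree u)

/-- `|Shift(t_u)|`: the smallest size of a periodic pattern of the unroll tree of `A` in `u`. -/
def shiftCount (A : FDDS) (u : A.S) : ℕ := sInf {p | A.PatternSize u p}

end FDDS

/-- A rooted tree is an unroll tree when it is isomorphic to the unroll tree of
some FDDS in one of its periodic states. -/
def IsUnrollTree (x : RTree) : Prop :=
  ∃ (A : FDDS) (u : A.S), A.Periodic u ∧ RTree.Iso x (A.unrollTree u)

end

/-!
Following a state along the dynamics lowers its depth by one at each step, so the depths occurring
in a system have no gaps. The vertices at level `k` of the unroll are, in total, the states of depth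
at most `k`; hence their number increases strictly with `k` up to the depth of the system and is
constant from there on. The depth is thus the first level at which the level sizes repeat, and this
is visible in any cut containing one level more.
-/

theorem RTree.Iso.card_level_eq {t s : RTree} (h : t.Iso s) (k : ℕ) :
    @Fintype.card _ (t.fin k) = @Fintype.card _ (s.fin k) :=
  let ⟨e, _⟩ := h
  @Fintype.card_congr _ _ (t.fin k) (s.fin k) (e k)

theorem RTree.card_level_tcut (t : RTree) {k n : ℕ} (hk : k ≤ n) :
    @Fintype.card _ ((t.tcut n).fin k) = @Fintype.card _ (t.fin k) :=
  letI : Unique (PLift (k ≤ n)) := ⟨⟨⟨hk⟩⟩, fun _ => rfl⟩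
  @Fintype.card_congr _ _ ((t.tcut n).fin k) (t.fin k) (Equiv.uniqueProd (t.level k) _)

theorem levelCard_fcut (F : Forest) {k n : ℕ} (hk : k ≤ n) :
    levelCard (fcut F n) k = levelCard F k := by
  simp only [levelCard, fcut, List.map_map, Function.comp_def, RTree.card_level_tcut _ hk]

theorem ForestEq.levelCard_eq {F G : Forest} (h : ForestEq F G) (k : ℕ) :
    levelCard F k = levelCard G k := by
  let c : RTree → ℕ := fun t => @Fintype.card _ (t.fin k)
  have hmap : (F : Multiset RTree).map c = (G : Multiset RTree).map c :=
    Multiset.rel_eq.1 <| Multiset.rel_map.2 <| h.mono fun _ _ _ _ hts => hts.card_level_eq k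
  exact congrArg Multiset.sum hmap

theorem ForestEq.eq_nil {F : Forest} (h : ForestEq F []) : F = [] :=
  (Multiset.coe_eq_zero F).1 (Multiset.rel_zero_right.1 h)

namespace FDDS

attribute [local instance] FDDS.fin

variable {A : FDDS}

theorem Periodic.iterate {u : A.S} (hu : A.Periodic u) (k : ℕ) : A.Periodic (A.f^[k] u) :=
  let ⟨p, hp, h⟩ := hu
  ⟨p, hp, Function.IsPeriodicPt.apply_iterate h k⟩

theorem exists_periodic_iterate (s : A.S) : ∃ k, A.Periodic (A.f^[k] s) := by
  obtain ⟨i, j, hne, hij⟩ := Finite.exists_ne_map_eq_of_infinite fun k : ℕ => A.f^[k] s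
  wlog hlt : i < j generalizing i j
  · exact this j i hne.symm hij.symm (by lia)
  refine ⟨i, j - i, by lia, ?_⟩
  rw [← Function.iterate_add_apply, Nat.sub_add_cancel hlt.le]
  exact hij.symm

theorem depthOf_le_iff {s : A.S} {k : ℕ} : A.depthOf s ≤ k ↔ A.Periodic (A.f^[k] s) := by
  refine ⟨fun h => ?_, fun h => Nat.sInf_le h⟩
  have hmin : A.Periodic (A.f^[A.depthOf s] s) := Nat.sInf_mem (exists_periodic_iterate s)
  rw [← Nat.sub_add_cancel h, Function.iterate_add_apply]
  exact hmin.iterate _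

theorem depthOf_iterate (s : A.S) (j : ℕ) : A.depthOf (A.f^[j] s) = A.depthOf s - j :=
  eq_of_forall_ge_iff fun k => by
    rw [depthOf_le_iff, ← Function.iterate_add_apply, ← depthOf_le_iff, tsub_le_iff_right]

theorem depth_le_iff {k : ℕ} : A.depth ≤ k ↔ ∀ s, A.depthOf s ≤ k := by
  have hrange : A.depth = ⨆ s, A.depthOf s := by
    simp only [depth, iSup, Set.range, eq_comm]
  rw [hrange, ciSup_le_iff' (Set.finite_range _).bddAbove]

theorem exists_depthOf_eq_of_lt_depth {k : ℕ} (hk : k < A.depth) :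
    ∃ s, A.depthOf s = k + 1 := by
  obtain ⟨s, hs⟩ : ∃ s, k < A.depthOf s := by
    simpa only [depth_le_iff, not_forall, not_le] using hk.not_ge
  exact ⟨A.f^[A.depthOf s - (k + 1)] s, by rw [depthOf_iterate]; lia⟩

theorem card_level_unrollTree [DecidableEq A.S] (u : A.S) (k : ℕ) :
    @Fintype.card _ ((A.unrollTree u).fin k) = Finset.card {s | A.f^[k] s = u} :=
  @Fintype.card_of_subtype _ _ _ (fun _ => Finset.mem_filter_univ _) ((A.unrollTree u).fin k)

theorem levelCard_unroll (A : FDDS) (k : ℕ) :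
    levelCard A.unroll k = Finset.card {s : A.S | A.depthOf s ≤ k} := by
  classical
  have hroots : ∀ s ∈ ({s | A.depthOf s ≤ k} : Finset A.S),
      A.f^[k] s ∈ ({u | A.Periodic u} : Finset A.S) := by
    simp only [Finset.mem_filter_univ, depthOf_le_iff, imp_self, implies_true]
  rw [Finset.card_eq_sum_card_fiberwise hroots, levelCard, unroll, List.map_map,
    Finset.sum_map_toList]
  refine Finset.sum_congr (by congr) fun u hu => ?_
  have hfiber (s : A.S) (hs : A.f^[k] s = u) : A.depthOf s ≤ k :=
    depthOf_le_iff.2 (hs ▸ (Finset.mem_filter_univ u).1 hu)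
  rw [Function.comp_apply, card_level_unrollTree, Finset.filter_filter]
  exact congrArg Finset.card <| Finset.filter_congr fun s _ =>
    (and_iff_right_of_imp (hfiber s)).symm

theorem depth_le_iff_levelCard_unroll_eq {k : ℕ} :
    A.depth ≤ k ↔ levelCard A.unroll k = levelCard A.unroll (k + 1) := by
  rw [levelCard_unroll, levelCard_unroll]
  refine ⟨fun h => ?_, fun h => ?_⟩
  · have hle (m : ℕ) (hm : k ≤ m) (s : A.S) : A.depthOf s ≤ m := (depth_le_iff.1 h s).trans hm
    simp only [hle k le_rfl, hle (k + 1) k.le_succ]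
  · by_contra! hlt
    obtain ⟨s, hs⟩ := exists_depthOf_eq_of_lt_depth hlt
    refine h.not_lt (Finset.card_lt_card (Finset.ssubset_iff_subset_ne.2 ⟨?_, ?_⟩))
    · exact Finset.monotone_filter_right _ fun _ _ hk => hk.trans k.le_succ
    · exact fun heq => by simpa [hs] using Finset.ext_iff.1 heq s

theorem depth_eq_of_levelCard_unroll_eq {B : FDDS}
    (h : ∀ k ≤ B.depth + 1, levelCard A.unroll k = levelCard B.unroll k) :
    A.depth = B.depth := by
  have hAB : A.depth ≤ B.depth := by
    rw [depth_le_iff_levelCard_unroll_eq, h _ (by lia), h _ le_rfl]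
    exact depth_le_iff_levelCard_unroll_eq.1 le_rfl
  have hBA : B.depth ≤ A.depth := by
    rw [depth_le_iff_levelCard_unroll_eq, ← h _ (by lia), ← h _ (by lia)]
    exact depth_le_iff_levelCard_unroll_eq.1 le_rfl
  exact le_antisymm hAB hBA

end FDDS

theorem stmt5_general (A B : FDDS) (n : ℕ) (hn : B.unroll ≠ [] → B.depth < n)
    (h : ForestEq (fcut (FDDS.unroll A) n) (fcut (FDDS.unroll B) n)) :
    A.depth = B.depth := by
  refine FDDS.depth_eq_of_levelCard_unroll_eq fun k hk => ?_
  rcases eq_or_ne B.unroll [] with hB | hB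
  · have hA : A.unroll = [] := List.map_eq_nil_iff.1 (ForestEq.eq_nil (hB ▸ h))
    rw [hA, hB]
  · have hkn : k ≤ n := hk.trans (hn hB)
    rw [← levelCard_fcut A.unroll hkn, ← levelCard_fcut B.unroll hkn, h.levelCard_eq k]

/-- Let `A` and `B` be FDDS, `α` the number of unroll trees of `𝒰(B)`,
and `n ≥ 2α + depth B`. If `𝒰(A)|_n = 𝒰(B)|_n` then `depth A = depth B`. -/
theorem stmt5 (A B : FDDS) (n : ℕ)
    (hn : 2 * (FDDS.unroll B).length + B.depth ≤ n)
    (h : ForestEq (fcut (FDDS.unroll A) n) (fcut (FDDS.unroll B) n)) :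
    A.depth = B.depth :=
  stmt5_general A B n (fun hB => by have := List.length_pos_iff.2 hB; lia) h
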